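/- If a trace τ over (T,X,V) is PC, then the happens-before relation of its split trace τ_split, i.e. the transitive closure of po' ∪ rf' ∪ sto' ∪ cf', is irreflexive. (Content of the forward direction of Lemma 4: splitting transactions breaks every happens-before cycle of a PC trace.) -/

import Mathlib

open scoped Classical

/-- A trace over `(T, X, V)`: transactions `T`, shared variables `X`, values `V`.
Each transaction has a read set `RS` with read values `rdval`, a write set `WS`
with last-written values `wrval`; there is an initial transaction `t0`, a
program order `po`, per-variable read-from relations `rf x` and per-variable
store orders `sto x`. -/
structure TxnTrace (T X V : Type*) where
  RS : T → Set X
  WS : T → Set X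
  rdval : T → X → V
  wrval : T → X → V
  t0 : T
  po : T → T → Prop
  rf : X → T → T → Prop
  sto : X → T → T → Prop

/-- a strict partial order: irreflexive and transitive binary relation -/
def StrictPartialRel {α : Type*} (r : α → α → Prop) : Prop :=
  (∀ a, ¬ r a a) ∧ ∀ a b c, r a b → r b c → r a c

/-- a strict total order -/
def StrictTotalRel {α : Type*} (r : α → α → Prop) : Prop :=
  StrictPartialRel r ∧ ∀ a b, a ≠ b → r a b ∨ r b a

/-- axiom Prefix: `arb ; vis ⊆ vis` -/
def PrefixAx {α : Type*} (vis arb : α → α → Prop) : Prop :=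
  ∀ a b c, arb a b → vis b c → vis a c

/-- `vis` is a strict partial order, `arb` a strict total order, `vis ⊆ arb` -/
def GoodPair {α : Type*} (vis arb : α → α → Prop) : Prop :=
  StrictPartialRel vis ∧ StrictTotalRel arb ∧ ∀ a b, vis a b → arb a b

namespace TxnTrace

variable {T X V : Type*} (τ : TxnTrace T X V)

/-- the well-formedness conditions of a trace -/
structure WellFormed : Prop where
  rs_init : τ.RS τ.t0 = ∅
  ws_init : τ.WS τ.t0 = Set.univ
  po_irrefl : ∀ t, ¬ τ.po t t
  po_trans : ∀ a b c, τ.po a b → τ.po b c → τ.po a c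
  po_init : ∀ t, t ≠ τ.t0 → τ.po τ.t0 t
  rf_wf : ∀ x t' t, τ.rf x t' t →
    t' ≠ t ∧ x ∈ τ.RS t ∧ x ∈ τ.WS t' ∧ τ.wrval t' x = τ.rdval t x
  rf_total : ∀ t x, x ∈ τ.RS t → ∃! t', τ.rf x t' t
  sto_dom : ∀ x a b, τ.sto x a b → x ∈ τ.WS a ∧ x ∈ τ.WS b
  sto_irrefl : ∀ x a, ¬ τ.sto x a a
  sto_trans : ∀ x a b c, τ.sto x a b → τ.sto x b c → τ.sto x a c
  sto_total : ∀ x a b, x ∈ τ.WS a → x ∈ τ.WS b → a ≠ b → τ.sto x a b ∨ τ.sto x b a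

/-- `rf = ⋃ x, rf x` -/
def rfR (a b : T) : Prop := ∃ x, τ.rf x a b

/-- `sto = ⋃ x, sto x` -/
def stoR (a b : T) : Prop := ∃ x, τ.sto x a b

/-- the conflict relation: `(t1,t3) ∈ cf` iff `t1 ≠ t3` and there are `x`, `t2`
with `(t2,t1) ∈ rf_x` and `(t2,t3) ∈ sto_x` -/
def cf (a b : T) : Prop := a ≠ b ∧ ∃ x w, τ.rf x w a ∧ τ.sto x w b

/-- `vis0 = po ∪ rf` -/
def vis0 (a b : T) : Prop := τ.po a b ∨ τ.rfR a b

/-- `arb0 = po ∪ rf ∪ sto` -/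
def arb0 (a b : T) : Prop := τ.po a b ∨ τ.rfR a b ∨ τ.stoR a b

/-- happens-before: `(po ∪ rf ∪ sto ∪ cf)⁺` -/
def hb : T → T → Prop := Relation.TransGen (fun a b => τ.arb0 a b ∨ τ.cf a b)

/-- axiom PoCo: `vis0⁺ ⊆ vis` -/
def PoCo (vis : T → T → Prop) : Prop := ∀ a b, Relation.TransGen τ.vis0 a b → vis a b

/-- axiom CoArb: `arb0⁺ ⊆ arb` -/
def CoArb (arb : T → T → Prop) : Prop := ∀ a b, Relation.TransGen τ.arb0 a b → arb a b

/-- axiom RetVal: every read of `x` in `t` reads from the `arb`-greatest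
`vis`-predecessor of `t` writing `x` -/
def RetVal (vis arb : T → T → Prop) : Prop :=
  ∀ t x, x ∈ τ.RS t → ∃ t00,
    (vis t00 t ∧ x ∈ τ.WS t00) ∧
    (∀ t', vis t' t → x ∈ τ.WS t' → t' ≠ t00 → arb t' t00) ∧
    τ.rf x t00 t


/-- axiom Conflict: `sto ⊆ vis` -/
def ConflictAx (vis : T → T → Prop) : Prop := ∀ a b, τ.stoR a b → vis a b


/-- causal consistency -/
def IsCC : Prop :=
  ∃ vis arb, GoodPair vis arb ∧ τ.PoCo vis ∧ τ.CoArb arb ∧ τ.RetVal vis arb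

/-- prefix consistency -/
def IsPC : Prop :=
  ∃ vis arb, GoodPair vis arb ∧ τ.PoCo vis ∧ τ.CoArb arb ∧ τ.RetVal vis arb ∧
    PrefixAx vis arb

/-- snapshot isolation -/
def IsSI : Prop :=
  ∃ vis arb, GoodPair vis arb ∧ τ.PoCo vis ∧ τ.CoArb arb ∧ τ.RetVal vis arb ∧
    PrefixAx vis arb ∧ τ.ConflictAx vis

/-- serializability: some strict total order `arb` with `arb0⁺ ⊆ arb` satisfies
RetVal with `vis = arb` -/
def IsSER : Prop :=
  ∃ arb, StrictTotalRel arb ∧ τ.CoArb arb ∧ τ.RetVal arb arb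

/-- the read part `t_rd` of a transaction in the split trace -/
def rdPart (t : T) : T × Bool := (t, false)

/-- the write part `t_wr` of a transaction in the split trace;
the initial transaction `t0` is kept unchanged and plays both roles -/
noncomputable def wrPart (t : T) : T × Bool := if t = τ.t0 then (t, false) else (t, true)

/-- the split trace `τ_split`: every transaction `t ≠ t0` is split into a read
part `t_rd` and a write part `t_wr`; `po'` is the smallest transitive relation
containing `(t_rd, t_wr)` for every split `t` and `(u_wr, v_rd)` for `(u,v) ∈ po`;
`rf'_x = {(u_wr, v_rd) : (u,v) ∈ rf_x}`; `sto'_x = {(u_wr, v_wr) : (u,v) ∈ sto_x}`.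
(The pair `(t0, true)` is an unused dummy element with empty read and write sets and
no incident relations.) -/
noncomputable def split : TxnTrace (T × Bool) X V where
  RS p := if p = rdPart p.1 then τ.RS p.1 else ∅
  WS p := if p = τ.wrPart p.1 then τ.WS p.1 else ∅
  rdval p x := τ.rdval p.1 x
  wrval p x := τ.wrval p.1 x
  t0 := (τ.t0, false)
  po := Relation.TransGen (fun a b =>
    (∃ t, t ≠ τ.t0 ∧ a = rdPart t ∧ b = τ.wrPart t) ∨
    (∃ u v, τ.po u v ∧ a = τ.wrPart u ∧ b = rdPart v))
  rf := fun x a b => ∃ u v, τ.rf x u v ∧ a = τ.wrPart u ∧ b = rdPart v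
  sto := fun x a b => ∃ u v, τ.sto x u v ∧ a = τ.wrPart u ∧ b = τ.wrPart v

end TxnTrace

/-! Give every split event the set of transactions that precede it: a write part `t_wr` gets the
transactions up to and including `t` in `arb`, a read part `t_rd` the transactions visible to `t`,
and at equal sets writes come before reads. `Prefix` makes visible sets downward closed in `arb`,
and `RetVal` forbids a conflict `t₁ → t₃` with `t₃` visible to `t₁`. Hence every generator of the
happens-before relation of the split trace strictly increases this position. -/

open Relation

theorem StrictPartialRel.setOf_reflGen_ssubset {α : Type*} {r : α → α → Prop}
    (hr : StrictPartialRel r) {a b : α} (hab : r a b) :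
    {s | ReflGen r s a} ⊂ {s | ReflGen r s b} := by
  obtain ⟨irrefl, trans⟩ := hr
  refine ⟨?_, fun hsub ↦ ?_⟩
  · rintro s (_ | hsa)
    · exact .single hab
    · exact .single (trans _ _ _ hsa hab)
  · rcases hsub (ReflGen.refl : ReflGen r b b) with _ | hba
    · exact irrefl _ hab
    · exact irrefl _ (trans _ _ _ hab hba)

theorem PrefixAx.setOf_reflGen_subset {α : Type*} {vis arb : α → α → Prop}
    (hpre : PrefixAx vis arb) {u v : α} (huv : vis u v) :
    {s | ReflGen arb s u} ⊆ {s | vis s v} := by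
  rintro s (_ | hsu)
  · exact huv
  · exact hpre _ _ _ hsu huv

theorem PrefixAx.setOf_vis_ssubset {α : Type*} {vis arb : α → α → Prop}
    (hpre : PrefixAx vis arb) (harb : StrictTotalRel arb) {u v : α} (hvu : ¬ vis v u) :
    {s | vis s u} ⊂ {s | ReflGen arb s v} := by
  refine ⟨fun s hsu ↦ ?_, fun hsub ↦ hvu (hsub ReflGen.refl)⟩
  have not_arb : ¬ arb v s := fun hvs ↦ hvu (hpre _ _ _ hvs hsu)
  by_cases hsv : s = v
  · exact hsv ▸ .refl
  · exact .single ((harb.2 s v hsv).resolve_right not_arb)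

namespace TxnTrace

variable {T X V : Type*} {τ : TxnTrace T X V}

theorem wrPart_fst (t : T) : (τ.wrPart t).1 = t := by
  unfold wrPart
  split_ifs <;> rfl

theorem wrPart_injective : Function.Injective τ.wrPart :=
  Function.LeftInverse.injective wrPart_fst

theorem rdPart_ne_wrPart {t : T} (ht : t ≠ τ.t0) : rdPart t ≠ τ.wrPart t := by
  simp [rdPart, wrPart, ht]

theorem WellFormed.ne_t0_of_rf (hwf : τ.WellFormed) {x : X} {u v : T} (h : τ.rf x u v) :
    v ≠ τ.t0 := by
  rintro rfl
  simpa only [hwf.rs_init, Set.mem_empty_iff_false] using (hwf.rf_wf x u _ h).2.1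

theorem WellFormed.ne_t0_of_cf (hwf : τ.WellFormed) {u v : T} (h : τ.cf u v) : u ≠ τ.t0 := by
  obtain ⟨-, x, w, hrf, -⟩ := h
  exact hwf.ne_t0_of_rf hrf

theorem WellFormed.ne_t0_of_vis (hwf : τ.WellFormed) {vis : T → T → Prop}
    (hvis : StrictPartialRel vis) (hpo : τ.PoCo vis) {u v : T} (h : vis u v) : v ≠ τ.t0 := by
  rintro rfl
  obtain ⟨irrefl, trans⟩ := hvis
  have hu : u ≠ τ.t0 := fun hu ↦ irrefl _ (hu ▸ h)
  exact irrefl _ (trans _ _ _ h (hpo _ _ (.single (.inl (hwf.po_init u hu)))))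

theorem RetVal.not_vis_of_cf {vis arb : T → T → Prop} (hret : τ.RetVal vis arb)
    (hwf : τ.WellFormed) (harb : StrictPartialRel arb) (hco : τ.CoArb arb) {u v : T}
    (h : τ.cf u v) : ¬ vis v u := by
  intro hvu
  obtain ⟨-, x, w, hrf, hsto⟩ := h
  have hx : x ∈ τ.RS u := (hwf.rf_wf x w u hrf).2.1
  obtain ⟨w', -, hmax, hrf'⟩ := hret u x hx
  obtain rfl : w' = w := (hwf.rf_total u x hx).unique hrf' hrf
  have hne : v ≠ w' := by
    rintro rfl
    exact hwf.sto_irrefl x v hsto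
  have hvw : arb v w' := hmax v hvu (hwf.sto_dom x w' v hsto).2 hne
  have hwv : arb w' v := hco _ _ (.single (.inr (.inr ⟨x, hsto⟩)))
  exact harb.1 _ (harb.2 _ _ _ hvw hwv)

variable (τ) in
/-- The generators of happens-before in the split trace, expressed through the relations of `τ`.
The split conflict `(u_rd, u_wr)` of a transaction that overwrites a variable it has read is not
a conflict of `τ`; it falls under `rd_wr`. -/
inductive SplitStep : T × Bool → T × Bool → Prop
  | rd_wr {t : T} (ht : t ≠ τ.t0) : SplitStep (rdPart t) (τ.wrPart t)
  | vis0 {u v : T} (h : τ.vis0 u v) : SplitStep (τ.wrPart u) (rdPart v)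
  | sto {u v : T} (h : τ.stoR u v) : SplitStep (τ.wrPart u) (τ.wrPart v)
  | cf {u v : T} (h : τ.cf u v) : SplitStep (rdPart u) (τ.wrPart v)

theorem split_po_le_transGen_splitStep : τ.split.po ≤ TransGen τ.SplitStep := by
  refine TransGen.mono ?_
  rintro _ _ (⟨t, ht, rfl, rfl⟩ | ⟨u, v, h, rfl, rfl⟩)
  · exact .rd_wr ht
  · exact .vis0 (.inl h)

theorem WellFormed.splitStep_of_split_cf (hwf : τ.WellFormed) {p q : T × Bool}
    (h : τ.split.cf p q) : τ.SplitStep p q := by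
  obtain ⟨-, x, _, ⟨w, u, hrf, rfl, rfl⟩, ⟨w', v, hsto, hw, rfl⟩⟩ := h
  obtain rfl : w = w' := wrPart_injective hw
  by_cases huv : u = v
  · exact huv ▸ .rd_wr (hwf.ne_t0_of_rf hrf)
  · exact .cf ⟨huv, x, w, hrf, hsto⟩

theorem WellFormed.split_hb_le_transGen_splitStep (hwf : τ.WellFormed) :
    τ.split.hb ≤ TransGen τ.SplitStep := by
  refine TransGen.closed ?_
  rintro p q ((hpo | ⟨x, u, v, hrf, rfl, rfl⟩ | ⟨x, u, v, hsto, rfl, rfl⟩) | hcf)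
  · exact split_po_le_transGen_splitStep p q hpo
  · exact .single (.vis0 (.inr ⟨x, hrf⟩))
  · exact .single (.sto ⟨x, hsto⟩)
  · exact .single (hwf.splitStep_of_split_cf hcf)

variable (τ) in
/-- The position of a split event, increasing along happens-before: the set of transactions that
precede it, where `false` and `true` put a write part before a read part with the same set. The
unsplit `t0` is positioned as a write part. -/
noncomputable def splitPos (vis arb : T → T → Prop) (p : T × Bool) : Set T ×ₗ Bool :=
  if p = τ.wrPart p.1 then toLex ({s | ReflGen arb s p.1}, false)
  else toLex ({s | vis s p.1}, true)

section SplitPos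

variable {vis arb : T → T → Prop} {u v : T}

theorem splitPos_wrPart (t : T) :
    τ.splitPos vis arb (τ.wrPart t) = toLex ({s | ReflGen arb s t}, false) := by
  simp only [splitPos, wrPart_fst, if_true]

theorem splitPos_rdPart {t : T} (ht : t ≠ τ.t0) :
    τ.splitPos vis arb (rdPart t) = toLex ({s | vis s t}, true) :=
  if_neg (rdPart_ne_wrPart ht)

theorem splitPos_wrPart_lt_rdPart (hpre : PrefixAx vis arb) (hv : v ≠ τ.t0) (huv : vis u v) :
    τ.splitPos vis arb (τ.wrPart u) < τ.splitPos vis arb (rdPart v) := by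
  rw [splitPos_wrPart, splitPos_rdPart hv, Prod.Lex.toLex_lt_toLex']
  exact ⟨hpre.setOf_reflGen_subset huv, fun _ ↦ Bool.false_lt_true⟩

theorem splitPos_wrPart_lt_wrPart (harb : StrictPartialRel arb) (huv : arb u v) :
    τ.splitPos vis arb (τ.wrPart u) < τ.splitPos vis arb (τ.wrPart v) := by
  rw [splitPos_wrPart, splitPos_wrPart, Prod.Lex.toLex_lt_toLex]
  exact .inl (harb.setOf_reflGen_ssubset huv)

theorem splitPos_rdPart_lt_wrPart (hpre : PrefixAx vis arb) (harb : StrictTotalRel arb)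
    (hu : u ≠ τ.t0) (hvu : ¬ vis v u) :
    τ.splitPos vis arb (rdPart u) < τ.splitPos vis arb (τ.wrPart v) := by
  rw [splitPos_rdPart hu, splitPos_wrPart, Prod.Lex.toLex_lt_toLex]
  exact .inl (hpre.setOf_vis_ssubset harb hvu)

theorem SplitStep.splitPos_lt (hwf : τ.WellFormed) (hvis : StrictPartialRel vis)
    (harb : StrictTotalRel arb) (hpo : τ.PoCo vis) (hco : τ.CoArb arb)
    (hret : τ.RetVal vis arb) (hpre : PrefixAx vis arb) {p q : T × Bool} (h : τ.SplitStep p q) :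
    τ.splitPos vis arb p < τ.splitPos vis arb q := by
  cases h with
  | rd_wr ht => exact splitPos_rdPart_lt_wrPart hpre harb ht (hvis.1 _)
  | vis0 h =>
    have huv := hpo _ _ (.single h)
    exact splitPos_wrPart_lt_rdPart hpre (hwf.ne_t0_of_vis hvis hpo huv) huv
  | sto h => exact splitPos_wrPart_lt_wrPart harb.1 (hco _ _ (.single (.inr (.inr h))))
  | cf h =>
    exact splitPos_rdPart_lt_wrPart hpre harb (hwf.ne_t0_of_cf h)
      (hret.not_vis_of_cf hwf harb.1 hco h)

end SplitPos

end TxnTrace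

theorem pc_split_hb_irrefl_general {T X V : Type*} (τ : TxnTrace T X V)
    (hwf : τ.WellFormed) (h : τ.IsPC) : ∀ p, ¬ τ.split.hb p p := by
  obtain ⟨vis, arb, ⟨hvis, harb, -⟩, hpo, hco, hret, hpre⟩ := h
  have step_lt : τ.SplitStep ≤ τ.splitPos vis arb ⁻¹'o (· < ·) := fun _ _ hstep ↦
    hstep.splitPos_lt hwf hvis harb hpo hco hret hpre
  intro p hp
  have pos_lt : τ.splitPos vis arb p < τ.splitPos vis arb p :=
    transGen_minimal step_lt p p (hwf.split_hb_le_transGen_splitStep p p hp)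
  exact lt_irrefl _ pos_lt

/-- forward direction of Lemma 4: if a trace is PC then the
happens-before relation of its split trace is irreflexive. -/
theorem pc_split_hb_irrefl {T X V : Type*} [Fintype T] (τ : TxnTrace T X V)
    (hwf : τ.WellFormed) (h : τ.IsPC) : ∀ p, ¬ τ.split.hb p p :=
  pc_split_hb_irrefl_general τ hwf h
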